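/- arXiv:2004.12343 — 2 statements merged into one kernel-verified Lean document; each statement's English description precedes it below -/
import Mathlib

section
/- The tensor product g ⊗ h of two semisimple Lie algebras over a field of characteristic zero, with multiplication (a⊗b)*(c⊗d) = [a,c]⊗[b,d], is a commutative algebra that is exact (all multiplication operators trace-free) and whose Killing form is nondegenerate and invariant. -/
theorem aux_trace_ad {F L : Type*} [Field F] [CharZero F]
    [LieRing L] [LieAlgebra F L] [FiniteDimensional F L] [LieAlgebra.IsSemisimple F L] (x : L) :
    LinearMap.trace F L (LieAlgebra.ad F L x) = 0 := by
  have hnd := LieAlgebra.IsKilling.killingForm_nondegenerate F L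
  let f : Module.Dual F L := LinearMap.trace F L ∘ₗ (LieAlgebra.ad F L : L →ₗ[F] Module.End F L)
  let y : L := (LinearMap.BilinForm.toDual (killingForm F L) hnd).symm f
  have hy : ∀ z, killingForm F L y z = LinearMap.trace F L (LieAlgebra.ad F L z) := fun z =>
    LinearMap.BilinForm.apply_toDual_symm_apply (hB := hnd) f z
  have h0 : ∀ a : L, ⁅y, a⁆ = 0 := by
    intro a
    refine hnd.1 _ fun b => ?_
    have h1 := LieModule.traceForm_apply_lie_apply F L L y a b
    rw [show killingForm F L = LieModule.traceForm F L L from rfl] at *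
    have h3 : LieAlgebra.ad F L ⁅a, b⁆ =
        LieAlgebra.ad F L a * LieAlgebra.ad F L b - LieAlgebra.ad F L b * LieAlgebra.ad F L a := by
      ext c
      simp
    rw [h1, hy, h3, map_sub,
      LinearMap.trace_mul_comm, sub_self]
  have h2 : LieAlgebra.ad F L y = 0 := by
    ext a
    simpa using h0 a
  rw [← hy, LieModule.traceForm_apply_apply]
  change LinearMap.trace F L (LieAlgebra.ad F L y ∘ₗ _) = 0
  rw [h2]
  simp

open TensorProduct in
/-- The tensor product of two semisimple Lie algebras over a field of characteristic
zero, with multiplication (a⊗b)*(c⊗d) = [a,c]⊗[b,d], is a commutative algebra that is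
exact and whose Killing form is nondegenerate and invariant. -/
theorem stmt_6 {F L1 L2 : Type*} [Field F] [CharZero F]
    [LieRing L1] [LieAlgebra F L1] [FiniteDimensional F L1] [LieAlgebra.IsSemisimple F L1]
    [LieRing L2] [LieAlgebra F L2] [FiniteDimensional F L2] [LieAlgebra.IsSemisimple F L2]
    (M : (L1 ⊗[F] L2) →ₗ[F] (L1 ⊗[F] L2) →ₗ[F] (L1 ⊗[F] L2))
    (hM : ∀ (a c : L1) (b d : L2),
      M (a ⊗ₜ[F] b) (c ⊗ₜ[F] d) = ⁅a, c⁆ ⊗ₜ[F] ⁅b, d⁆) :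
    (∀ u v : L1 ⊗[F] L2, M u v = M v u) ∧
    (∀ u : L1 ⊗[F] L2, LinearMap.trace F (L1 ⊗[F] L2) (M u) = 0) ∧
    (∀ u : L1 ⊗[F] L2,
      (∀ v : L1 ⊗[F] L2, LinearMap.trace F (L1 ⊗[F] L2) (M u ∘ₗ M v) = 0) → u = 0) ∧
    (∀ u v w : L1 ⊗[F] L2,
      LinearMap.trace F (L1 ⊗[F] L2) (M (M u v) ∘ₗ M w) =
        LinearMap.trace F (L1 ⊗[F] L2) (M u ∘ₗ M (M v w))) := by
  have hMt : ∀ (a : L1) (b : L2), M (a ⊗ₜ[F] b) =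
      TensorProduct.map (LieAlgebra.ad F L1 a) (LieAlgebra.ad F L2 b) := by
    intro a b
    ext c d
    simp [hM]
  have hK : ∀ (a c : L1) (b d : L2),
      LinearMap.trace F (L1 ⊗[F] L2) (M (a ⊗ₜ[F] b) ∘ₗ M (c ⊗ₜ[F] d)) =
        killingForm F L1 a c * killingForm F L2 b d := by
    intro a c b d
    rw [hMt, hMt, ← TensorProduct.map_comp, LinearMap.trace_tensorProduct']
    rfl
  refine ⟨?_, ?_, ?_, ?_⟩
  · intro u v
    induction u with
    | zero => simp
    | add x y hx hy => simp [hx, hy]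
    | tmul a b =>
      induction v with
      | zero => simp
      | add x y hx hy => simp [hx, hy]
      | tmul c d =>
        rw [hM, hM, ← lie_skew, ← lie_skew d b, TensorProduct.neg_tmul, TensorProduct.tmul_neg]
  · intro u
    induction u with
    | zero => simp
    | add x y hx hy => simp [hx, hy]
    | tmul a b =>
      rw [hMt, LinearMap.trace_tensorProduct', aux_trace_ad, zero_mul]
  · intro u hu
    have hn1 := LieAlgebra.IsKilling.killingForm_nondegenerate F L1
    have hn2 := LieAlgebra.IsKilling.killingForm_nondegenerate F L2
    let b1 := Module.finBasis F L1
    let b2 := Module.finBasis F L2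
    let d1 := LinearMap.BilinForm.dualBasis (killingForm F L1) hn1 b1
    let d2 := LinearMap.BilinForm.dualBasis (killingForm F L2) hn2 b2
    refine (d1.tensorProduct d2).ext_elem fun p => ?_
    obtain ⟨i, j⟩ := p
    rw [map_zero, Finsupp.zero_apply, ← hu (b1 i ⊗ₜ b2 j)]
    clear hu
    induction u with
    | zero => simp
    | add x y hx hy =>
      rw [map_add, Finsupp.add_apply, hx, hy, map_add, LinearMap.add_comp, map_add]
    | tmul a b =>
      rw [hK, Module.Basis.tensorProduct_repr_tmul_apply]
      simp only [d1, d2, LinearMap.BilinForm.dualBasis_repr_apply]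
      simp [mul_comm]
  · intro u v w
    induction u with
    | zero => simp
    | add x y hx hy => simp only [map_add, LinearMap.add_apply, LinearMap.add_comp, hx, hy]
    | tmul a b =>
      induction v with
      | zero => simp
      | add x y hx hy =>
        simp only [map_add, LinearMap.add_apply, LinearMap.add_comp, LinearMap.comp_add, hx, hy]
      | tmul c d =>
        induction w with
        | zero => simp
        | add x y hx hy => simp only [map_add, LinearMap.comp_add, hx, hy]
        | tmul e f =>
          rw [hM, hM, hK, hK]
          have h1 := LieModule.traceForm_apply_lie_apply F L1 L1 a c e
          have h2 := LieModule.traceForm_apply_lie_apply F L2 L2 b d f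
          rw [show killingForm F L1 = LieModule.traceForm F L1 L1 from rfl,
            show killingForm F L2 = LieModule.traceForm F L2 L2 from rfl, h1, h2]
end

section
/- For complex n×n matrices X, Y with the real inner product f(X,Y) = Re tr(X*Y) (X* the conjugate transpose), the commutator satisfies |[X,Y]|²_f ≤ 2(|X|²_f |Y|²_f − f(X,Y)²). Moreover, if the weaker inequality |[X,Y]|²_f ≤ C|X|²_f|Y|²_f holds for all X,Y with a constant C, then |[X,Y]|²_f ≤ C(|X|²_f |Y|²_f − f(X,Y)²) holds for all X, Y (proved by applying the weaker inequality to P = |Y|X − |X|Y and Q = |Y|X + |X|Y). -/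
open Matrix

namespace BW

open scoped ComplexOrder

variable {n : ℕ}

/-- The real Frobenius inner product. -/
noncomputable def F (X Y : Matrix (Fin n) (Fin n) ℂ) : ℝ := ((Xᴴ * Y).trace).re

lemma F_sub_left (X Y Z : Matrix (Fin n) (Fin n) ℂ) : F (X - Y) Z = F X Z - F Y Z := by
  simp [F, sub_mul]
lemma F_sub_right (X Y Z : Matrix (Fin n) (Fin n) ℂ) : F X (Y - Z) = F X Y - F X Z := by
  simp [F, mul_sub]
lemma F_add_left (X Y Z : Matrix (Fin n) (Fin n) ℂ) : F (X + Y) Z = F X Z + F Y Z := by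
  simp [F, add_mul]
lemma F_add_right (X Y Z : Matrix (Fin n) (Fin n) ℂ) : F X (Y + Z) = F X Y + F X Z := by
  simp [F, mul_add]
lemma F_smul_left (r : ℝ) (X Y : Matrix (Fin n) (Fin n) ℂ) :
    F ((r : ℂ) • X) Y = r * F X Y := by
  simp [F]
lemma F_smul_right (r : ℝ) (X Y : Matrix (Fin n) (Fin n) ℂ) :
    F X ((r : ℂ) • Y) = r * F X Y := by
  simp [F]
lemma F_comm (X Y : Matrix (Fin n) (Fin n) ℂ) : F X Y = F Y X := by
  unfold F
  rw [← conjTranspose_conjTranspose X, ← conjTranspose_mul, trace_conjTranspose]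
  simp
lemma F_self (X : Matrix (Fin n) (Fin n) ℂ) : F X X = ∑ i, ∑ j, Complex.normSq (X j i) := by
  simp [F, trace, mul_apply, Complex.normSq_apply]
lemma F_nonneg (X : Matrix (Fin n) (Fin n) ℂ) : 0 ≤ F X X := by
  rw [F_self]
  exact Finset.sum_nonneg fun i _ => Finset.sum_nonneg fun j _ => Complex.normSq_nonneg _
lemma F_eq_zero {X : Matrix (Fin n) (Fin n) ℂ} (h : F X X = 0) : X = 0 := by
  rw [F_self, Finset.sum_eq_zero_iff_of_nonneg
    fun i _ => Finset.sum_nonneg fun j _ => Complex.normSq_nonneg _] at h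
  ext j i
  have := h i (Finset.mem_univ _)
  rw [Finset.sum_eq_zero_iff_of_nonneg fun j _ => Complex.normSq_nonneg _] at this
  simpa using this j (Finset.mem_univ _)

lemma reduction (C : ℝ)
    (h : ∀ X Y : Matrix (Fin n) (Fin n) ℂ,
      F (X * Y - Y * X) (X * Y - Y * X) ≤ C * (F X X * F Y Y))
    (X Y : Matrix (Fin n) (Fin n) ℂ) :
    F (X * Y - Y * X) (X * Y - Y * X) ≤ C * (F X X * F Y Y - (F X Y) ^ 2) := by
  by_cases hX : X = 0
  · subst hX; simp [F]
  by_cases hY : Y = 0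
  · subst hY; simp [F]
  have hx : 0 < F X X := lt_of_le_of_ne (F_nonneg X) fun e => hX (F_eq_zero e.symm)
  have hy : 0 < F Y Y := lt_of_le_of_ne (F_nonneg Y) fun e => hY (F_eq_zero e.symm)
  obtain ⟨x, hx0, hxx⟩ : ∃ x : ℝ, 0 < x ∧ x * x = F X X :=
    ⟨_, Real.sqrt_pos.2 hx, Real.mul_self_sqrt hx.le⟩
  obtain ⟨y, hy0, hyy⟩ : ∃ x : ℝ, 0 < x ∧ x * x = F Y Y :=
    ⟨_, Real.sqrt_pos.2 hy, Real.mul_self_sqrt hy.le⟩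
  have key := h ((y : ℂ) • X - (x : ℂ) • Y) ((y : ℂ) • X + (x : ℂ) • Y)
  have e : ((y : ℂ) • X - (x : ℂ) • Y) * ((y : ℂ) • X + (x : ℂ) • Y)
      - ((y : ℂ) • X + (x : ℂ) • Y) * ((y : ℂ) • X - (x : ℂ) • Y)
      = ((2 * x * y : ℝ) : ℂ) • (X * Y - Y * X) := by
    simp only [mul_add, mul_sub, add_mul, sub_mul, smul_mul_assoc, mul_smul_comm, smul_smul,
      smul_sub]
    push_cast
    module
  rw [e] at key
  generalize X * Y - Y * X = Z at key ⊢
  simp only [F_smul_left, F_smul_right, F_sub_left, F_sub_right, F_add_left, F_add_right,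
    F_comm Y X, ← hxx, ← hyy] at key
  rw [← hxx, ← hyy]
  have hp : 0 < 4 * (x * y) ^ 2 := by positivity
  refine le_of_mul_le_mul_left ?_ hp
  nlinarith [key]

lemma scalar (q a : Fin n → ℝ) (hq : ∀ i, 0 ≤ q i) :
    (∑ i, q i) * (∑ i, q i * a i ^ 2) - (∑ i, q i * a i) ^ 2
      ≤ (∑ i, q i) ^ 2 / 2 * ∑ i, a i ^ 2 := by
  set s := ∑ i, q i with hs
  have h1 : s * (∑ i, q i * a i ^ 2) - (∑ i, q i * a i) ^ 2
      = ∑ i, ∑ j, q i * q j * ((a i ^ 2 + a j ^ 2) / 2 - a i * a j) := by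
    have e1 : s * (∑ i, q i * a i ^ 2) = ∑ i, ∑ j, q i * q j * a j ^ 2 := by
      rw [hs, Finset.sum_mul_sum]
      simp only [mul_assoc]
    have e2 : s * (∑ i, q i * a i ^ 2) = ∑ i, ∑ j, q i * q j * a i ^ 2 := by
      rw [e1, Finset.sum_comm]
      simp only [mul_comm]
    have e3 : (∑ i, q i * a i) ^ 2 = ∑ i, ∑ j, q i * q j * (a i * a j) := by
      rw [sq, Finset.sum_mul_sum]
      exact Finset.sum_congr rfl fun i _ => Finset.sum_congr rfl fun j _ => by ring
    have e4 : s * (∑ i, q i * a i ^ 2) = (∑ i, ∑ j, q i * q j * a j ^ 2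
        + ∑ i, ∑ j, q i * q j * a i ^ 2) / 2 := by linarith
    rw [e4, e3, ← Finset.sum_add_distrib, Finset.sum_div, ← Finset.sum_sub_distrib]
    refine Finset.sum_congr rfl fun i _ => ?_
    rw [← Finset.sum_add_distrib, Finset.sum_div, ← Finset.sum_sub_distrib]
    exact Finset.sum_congr rfl fun j _ => by ring
  have h2 : ∑ i, ∑ j, q i * q j * ((a i ^ 2 + a j ^ 2) / 2 - a i * a j)
      ≤ ∑ i, ∑ j, (q i * q j * (a i ^ 2 + a j ^ 2)
        - if i = j then q i * q i * (2 * a i ^ 2) else 0) := by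
    refine Finset.sum_le_sum fun i _ => Finset.sum_le_sum fun j _ => ?_
    split_ifs with hij
    · subst hij; apply le_of_eq; ring
    · have := mul_nonneg (mul_nonneg (hq i) (hq j)) (sq_nonneg (a i + a j))
      nlinarith
  have h3 : ∑ i, ∑ j, (q i * q j * (a i ^ 2 + a j ^ 2)
        - if i = j then q i * q i * (2 * a i ^ 2) else 0)
      = ∑ i, 2 * q i * (s - q i) * a i ^ 2 := by
    have e1 : s * (∑ i, q i * a i ^ 2) = ∑ i, ∑ j, q i * q j * a j ^ 2 := by
      rw [hs, Finset.sum_mul_sum]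
      simp only [mul_assoc]
    have e2 : s * (∑ i, q i * a i ^ 2) = ∑ i, ∑ j, q i * q j * a i ^ 2 := by
      rw [e1, Finset.sum_comm]
      simp only [mul_comm]
    simp only [mul_add, Finset.sum_sub_distrib, Finset.sum_add_distrib, ← e1, ← e2]
    simp only [Finset.sum_ite_eq, Finset.mem_univ, if_true]
    rw [← two_mul, ← mul_assoc, Finset.mul_sum, ← Finset.sum_sub_distrib]
    exact Finset.sum_congr rfl fun j _ => by ring
  rw [h1]
  refine h2.trans ?_
  rw [h3, Finset.mul_sum]
  refine Finset.sum_le_sum fun i _ => ?_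
  nlinarith [mul_nonneg (sq_nonneg (s - 2 * q i)) (sq_nonneg (a i))]

/-- Variance bound for hermitian matrices. -/
lemma herm (S A : Matrix (Fin n) (Fin n) ℂ) (hS : S.PosSemidef) (hA : A.IsHermitian) :
    S.trace.re * (S * (A * A)).trace.re - ((S * A).trace.re) ^ 2
      ≤ S.trace.re ^ 2 / 2 * (A * A).trace.re := by
  set U : Matrix (Fin n) (Fin n) ℂ := (hA.eigenvectorUnitary : Matrix (Fin n) (Fin n) ℂ) with hU
  set D : Matrix (Fin n) (Fin n) ℂ := diagonal fun i => ((hA.eigenvalues i : ℝ) : ℂ) with hD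
  have hUU : Uᴴ * U = 1 := by
    have := Unitary.coe_star_mul_self hA.eigenvectorUnitary
    simpa [star_eq_conjTranspose] using this
  have hUU' : U * Uᴴ = 1 := by
    have := Unitary.coe_mul_star_self hA.eigenvectorUnitary
    simpa [star_eq_conjTranspose] using this
  have hAD : A = U * D * Uᴴ := by
    have := hA.spectral_theorem
    rw [Unitary.conjStarAlgAut_apply] at this
    simpa [star_eq_conjTranspose, hD, hU, Function.comp_def] using this
  have hAA : A * A = U * (D * D) * Uᴴ := by
    rw [hAD]
    calc U * D * Uᴴ * (U * D * Uᴴ) = U * D * (Uᴴ * U) * D * Uᴴ := by simp only [Matrix.mul_assoc]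
      _ = _ := by rw [hUU]; simp only [Matrix.mul_assoc, Matrix.one_mul]
  set T := Uᴴ * S * U with hT
  have hTp : T.PosSemidef := hS.conjTranspose_mul_mul_same U
  have t1 : ∀ M : Matrix (Fin n) (Fin n) ℂ, (S * (U * M * Uᴴ)).trace = (T * M).trace := by
    intro M
    rw [hT, ← Matrix.mul_assoc, trace_mul_comm]
    simp only [Matrix.mul_assoc]
  have t0 : S.trace = T.trace := by
    have := t1 1
    simpa [hUU'] using this
  have t2 : (A * A).trace = (D * D).trace := by
    rw [hAA, trace_mul_comm, ← Matrix.mul_assoc, hUU, Matrix.one_mul]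
  have u1 : (S * (A * A)).trace.re = ∑ i, (T i i).re * hA.eigenvalues i ^ 2 := by
    rw [hAA, t1, hD]
    simp [trace, diagonal_mul_diagonal, mul_diagonal, sq]
  have u2 : (S * A).trace.re = ∑ i, (T i i).re * hA.eigenvalues i := by
    conv_lhs => rw [hAD]
    rw [t1, hD]
    simp [trace, mul_diagonal]
  have u3 : (A * A).trace.re = ∑ i, hA.eigenvalues i ^ 2 := by
    rw [t2, hD]
    simp [trace, diagonal_mul_diagonal, sq]
  have u0 : S.trace.re = ∑ i, (T i i).re := by
    rw [t0]; simp [trace]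
  rw [u0, u1, u2, u3]
  refine scalar _ _ fun i => ?_
  have := hTp.diag_nonneg (i := i)
  exact (Complex.le_def.1 this).1

lemma cs (M N : Matrix (Fin n) (Fin n) ℂ) :
    (Mᴴ * N).trace.re ^ 2 + (Mᴴ * N).trace.im ^ 2 ≤ F M M * F N N := by
  by_cases hM : M = 0
  · subst hM; simp [F]
  have hm : 0 < F M M := lt_of_le_of_ne (F_nonneg M) fun e => hM (F_eq_zero e.symm)
  set c := (Mᴴ * N).trace with hc
  have hc' : (Nᴴ * M).trace = star c := by
    rw [hc, ← trace_conjTranspose, conjTranspose_mul, conjTranspose_conjTranspose]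
  have key := F_nonneg (((F M M : ℝ) : ℂ) • N - c • M)
  simp only [F_smul_left, F_smul_right, F_sub_left, F_sub_right] at key
  have e1 : F N (c • M) = c.re ^ 2 + c.im ^ 2 := by
    simp [F, hc']; ring
  have e3 : F (c • M) (c • M) = (c.re ^ 2 + c.im ^ 2) * F M M := by
    rw [F_self, F_self, Finset.mul_sum]
    refine Finset.sum_congr rfl fun i _ => ?_
    rw [Finset.mul_sum]
    refine Finset.sum_congr rfl fun j _ => ?_
    simp [Complex.normSq_apply]; ring
  rw [F_comm (c • M) N, e1, e3] at key
  nlinarith [le_of_mul_le_mul_left (a := F M M) (b := c.re ^ 2 + c.im ^ 2)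
    (c := F M M * F N N) (by nlinarith) hm]

lemma bw (X Y : Matrix (Fin n) (Fin n) ℂ) :
    F (X * Y - Y * X) (X * Y - Y * X) ≤ 2 * (F X X * F Y Y) := by
  by_cases hY : Y = 0
  · subst hY; simp [F]
  have hy : 0 < F Y Y := lt_of_le_of_ne (F_nonneg Y) fun e => hY (F_eq_zero e.symm)
  set S := Y * Yᴴ + Yᴴ * Y with hS
  have hSp : S.PosSemidef :=
    (posSemidef_self_mul_conjTranspose Y).add (posSemidef_conjTranspose_mul_self Y)
  have hSt : S.trace.re = 2 * F Y Y := by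
    simp [hS, F, trace_mul_comm Y]; ring
  set A : Matrix (Fin n) (Fin n) ℂ := (1 / 2 : ℂ) • (X + Xᴴ) with hAd
  set B : Matrix (Fin n) (Fin n) ℂ := (-Complex.I / 2 : ℂ) • (X - Xᴴ) with hBd
  have hA : A.IsHermitian := by
    simp [hAd, IsHermitian, add_comm]
  have hB : B.IsHermitian := by
    rw [IsHermitian, hBd, conjTranspose_smul, conjTranspose_sub, conjTranspose_conjTranspose]
    simp
    module
  have hX : X = A + Complex.I • B := by
    rw [hAd, hBd, smul_smul]
    have : Complex.I * (-Complex.I / 2) = 1 / 2 := by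
      linear_combination (-1 / 2 : ℂ) * Complex.I_mul_I
    rw [this]; module
  clear_value A B
  clear hAd hBd
  have hXs : Xᴴ = A - Complex.I • B := by
    rw [hX, conjTranspose_add, conjTranspose_smul, hA.eq, hB.eq]
    simp [sub_eq_add_neg]
  have hsum : Xᴴ * X + X * Xᴴ = (2 : ℂ) • (A * A) + (2 : ℂ) • (B * B) := by
    rw [hXs, hX]
    simp only [mul_add, mul_sub, add_mul, sub_mul, Matrix.smul_mul, Matrix.mul_smul, smul_add,
      smul_sub, smul_smul, Complex.I_mul_I]
    module
  have hXX : F X X = (A * A).trace.re + (B * B).trace.re := by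
    have h1 := congrArg (fun M => (trace M).re) hsum
    simp [trace_mul_comm X] at h1
    unfold F; linarith
  have hid : F (X * Y - Y * X) (X * Y - Y * X) + F (Xᴴ * Y + Y * Xᴴ) (Xᴴ * Y + Y * Xᴴ)
      = (S * (Xᴴ * X + X * Xᴴ)).trace.re := by
    have c1 : F (X * Y) (X * Y) = (Y * Yᴴ * (Xᴴ * X)).trace.re := by
      rw [F, conjTranspose_mul, Matrix.mul_assoc Y, trace_mul_comm Y]
      simp only [Matrix.mul_assoc]
    have c2 : F (Y * X) (Y * X) = (Yᴴ * Y * (X * Xᴴ)).trace.re := by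
      rw [F, conjTranspose_mul, Matrix.mul_assoc, trace_mul_comm]
      simp only [Matrix.mul_assoc]
    have c3 : F (Xᴴ * Y) (Xᴴ * Y) = (Y * Yᴴ * (X * Xᴴ)).trace.re := by
      rw [F, conjTranspose_mul, conjTranspose_conjTranspose, Matrix.mul_assoc Y, trace_mul_comm Y]
      simp only [Matrix.mul_assoc]
    have c4 : F (Y * Xᴴ) (Y * Xᴴ) = (Yᴴ * Y * (Xᴴ * X)).trace.re := by
      rw [F, conjTranspose_mul, conjTranspose_conjTranspose, Matrix.mul_assoc, trace_mul_comm]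
      simp only [Matrix.mul_assoc]
    have c5 : F (X * Y) (Y * X) = F (Xᴴ * Y) (Y * Xᴴ) := by
      rw [F_comm (Xᴴ * Y), F, F]
      simp only [conjTranspose_mul, conjTranspose_conjTranspose]
      rw [← Matrix.mul_assoc, trace_mul_comm]
      simp only [Matrix.mul_assoc]
    simp only [F_sub_left, F_sub_right, F_add_left, F_add_right, F_comm (Y * X) (X * Y),
      F_comm (Y * Xᴴ) (Xᴴ * Y), c1, c2, c3, c4, c5, hS, add_mul, mul_add, trace_add, Complex.add_re]
    ring
  have him : ∀ H : Matrix (Fin n) (Fin n) ℂ, H.IsHermitian → (S * H).trace.im = 0 := by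
    intro H hH
    have : star (S * H).trace = (S * H).trace := by
      rw [← trace_conjTranspose, conjTranspose_mul, hH.eq, hSp.1.eq, trace_mul_comm]
    exact Complex.conj_eq_iff_im.1 this
  have htr : (Yᴴ * (Xᴴ * Y + Y * Xᴴ)).trace = (S * A).trace - Complex.I * (S * B).trace := by
    have : (Yᴴ * (Xᴴ * Y + Y * Xᴴ)).trace = (S * Xᴴ).trace := by
      rw [hS, mul_add, add_mul, trace_add, trace_add, trace_mul_comm Yᴴ, Matrix.mul_assoc,
        trace_mul_comm Xᴴ]
      simp only [Matrix.mul_assoc]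
    rw [this, hXs, mul_sub, trace_sub, Matrix.mul_smul, trace_smul, smul_eq_mul]
  have hcs := cs Y (Xᴴ * Y + Y * Xᴴ)
  rw [htr] at hcs
  simp [him A hA, him B hB] at hcs
  have h1 := herm S A hSp hA
  have h2 := herm S B hSp hB
  rw [hsum] at hid
  simp [mul_add] at hid
  rw [hSt] at h1 h2
  refine le_of_mul_le_mul_left ?_ hy
  rw [hXX]
  nlinarith

end BW


/-- The Böttcher–Wenzel inequality for complex matrices with the real Frobenius inner
product f(X,Y) = Re tr(Xᴴ Y), together with the reduction lemma: a bound
|[X,Y]|² ≤ C|X|²|Y|² self-improves to |[X,Y]|² ≤ C(|X|²|Y|² − f(X,Y)²). -/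
theorem stmt_19 (n : ℕ) :
    (∀ X Y : Matrix (Fin n) (Fin n) ℂ,
      (((X * Y - Y * X)ᴴ * (X * Y - Y * X)).trace).re ≤
        2 * (((Xᴴ * X).trace).re * ((Yᴴ * Y).trace).re - (((Xᴴ * Y).trace).re) ^ 2)) ∧
    (∀ C : ℝ,
      (∀ X Y : Matrix (Fin n) (Fin n) ℂ,
        (((X * Y - Y * X)ᴴ * (X * Y - Y * X)).trace).re ≤
          C * (((Xᴴ * X).trace).re * ((Yᴴ * Y).trace).re)) →
      ∀ X Y : Matrix (Fin n) (Fin n) ℂ,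
        (((X * Y - Y * X)ᴴ * (X * Y - Y * X)).trace).re ≤
          C * (((Xᴴ * X).trace).re * ((Yᴴ * Y).trace).re - (((Xᴴ * Y).trace).re) ^ 2)) := by
  refine ⟨fun X Y => BW.reduction 2 BW.bw X Y, fun C h X Y => BW.reduction C h X Y⟩
end
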